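/- Let a, b, c be nonnegative integers with a ≥ b−1 and a, b ≥ c−1. Call a partition μ = (x,y,z) with x ≥ y ≥ z ≥ 0, x ≤ a+b+c, y ≤ b+c, z ≤ c negative if z ≥ min(b+c−x, ⌈(y−a)/2⌉). Then every negative subpartition of λ(a,b,c) belongs to the string S(P_{ij}) for exactly one pseudohead index pair (i,j); conversely, every element of any string S(P_{ij}) is a negative subpartition of λ(a,b,c). -/

import Mathlib

/-- `⌈m/2⌉` for an integer `m`, computed as `⌊(m+1)/2⌋`. -/
def ceilHalf (m : ℤ) : ℤ := Int.fdiv (m + 1) 2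

/-- `ε^{EF} = max(0, E+2F−b−c)` for tails. -/
def epsT (b c E F : ℤ) : ℤ := max 0 (E + 2 * F - b - c)

/-- `δ^{EF} = ⌈(E+F−a)/2⌉` for tails. -/
def delT (a E F : ℤ) : ℤ := ceilHalf (E + F - a)

/-- `(E,F)` is a tail index pair. -/
def IsTail (a b c E F : ℤ) : Prop :=
  0 ≤ F ∧ F ≤ c - epsT b c E F ∧ 2 * epsT b c E F ≤ E ∧ E ≤ F + a ∧
    4 * E + 5 * F - 3 * epsT b c E F ≤ a + 3 * b + 3 * c

/-- `ε_{ij} = max(0, i+j−b−c)` for pseudoheads. -/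
def epsP (b c i j : ℤ) : ℤ := max 0 (i + j - b - c)

/-- `δ_{ij} = ⌈(i+ε_{ij}−a)/2⌉` for pseudoheads. -/
def delP (a b c i j : ℤ) : ℤ := ceilHalf (i + epsP b c i j - a)

/-- `(i,j)` is a pseudohead index pair. -/
def IsPseudohead (a b c i j : ℤ) : Prop :=
  0 ≤ j ∧ j ≤ c ∧ j ≤ i ∧ i ≤ b + c ∧ 4 * i + j ≤ a + 3 * b + 3 * c ∧ i - 2 * j ≤ a

/-- `(x,y,z)` is a subpartition of `λ(a,b,c) = (a+b+c, b+c, c)`. -/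
def IsSubpartition (a b c x y z : ℤ) : Prop :=
  0 ≤ z ∧ z ≤ y ∧ y ≤ x ∧ x ≤ a + b + c ∧ y ≤ b + c ∧ z ≤ c

/-- The string `S(P_{ij})` of the pseudohead `P_{ij} = (i,i,j)`:
with `(E,F) = (i−j+2ε_{ij}, j−ε_{ij})`, `p = a+b+c−E`, `q̄ = b+c−F`, it is
`{(x,i,j) : i ≤ x < p} ∪ {(p,y,j) : i ≤ y < q̄} ∪ {(p,q̄,z) : j ≤ z ≤ c}`. -/
def Sstring (a b c i j : ℤ) : Set (ℤ × ℤ × ℤ) :=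
  {μ | (∃ x : ℤ, i ≤ x ∧ x < a + b + c - (i - j + 2 * epsP b c i j) ∧ μ = (x, i, j)) ∨
       (∃ y : ℤ, i ≤ y ∧ y < b + c - (j - epsP b c i j) ∧
          μ = (a + b + c - (i - j + 2 * epsP b c i j), y, j)) ∨
       (∃ z : ℤ, j ≤ z ∧ z ≤ c ∧
          μ = (a + b + c - (i - j + 2 * epsP b c i j), b + c - (j - epsP b c i j), z))}

/-!
Write `n = b + c`. If `i + j ≤ n`, then `(p, q̄) = (a + n - i + j, n - j)`; if `i + j ≥ n`, then
`(p, q̄) = (a + 3n - 3i - j, i)` and the middle leg of the string is empty. In either range these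
formulas can be inverted, so a triple lying on a string determines `(i, j)`: the strings over *all*
integer pairs are disjoint, and together they contain every triple with `y ≤ x` and `z ≤ c`.

It remains to see which strings consist of negative subpartitions. In the first range `q̄ ≤ p` says
`i - 2j ≤ a`, which implies `4i + j ≤ a + 3n` because `4i + j = (i - 2j) + 3(i + j)`; in the second
range `q̄ ≤ p` says `4i + j ≤ a + 3n`, which implies `i - 2j ≤ a` for the same reason. The last two
conditions on a pseudohead thus amount to `q̄ ≤ p`, and a single negative subpartition on the string
forces this inequality.
-/

section NegativeSubpartitions

variable {a b c i j x y z : ℤ}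

/-- The triple `(x, y, z)` is negative: `z ≥ min(b+c−x, ⌈(y−a)/2⌉)`. Being a subpartition of
`λ(a,b,c)` is not part of this condition. -/
def IsNegative (a b c x y z : ℤ) : Prop :=
  min (b + c - x) (ceilHalf (y - a)) ≤ z

lemma ceilHalf_le_iff {m k : ℤ} : ceilHalf m ≤ k ↔ m ≤ 2 * k := by
  rw [ceilHalf, Int.fdiv_eq_ediv_of_nonneg _ zero_le_two]
  omega

lemma isNegative_iff : IsNegative a b c x y z ↔ b + c ≤ x + z ∨ y ≤ a + 2 * z := by
  rw [IsNegative, min_le_iff, ceilHalf_le_iff]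
  omega

/-- The first part `p` of the last element `(p, q̄, c)` of the string `S(P_{ij})`. -/
def tailX (a b c i j : ℤ) : ℤ :=
  a + b + c - (i - j + 2 * epsP b c i j)

/-- The second part `q̄` of the last element `(p, q̄, c)` of the string `S(P_{ij})`. -/
def tailY (b c i j : ℤ) : ℤ :=
  b + c - (j - epsP b c i j)

lemma epsP_of_add_le (h : i + j ≤ b + c) : epsP b c i j = 0 :=
  max_eq_left (by omega)

lemma epsP_of_le_add (h : b + c ≤ i + j) : epsP b c i j = i + j - b - c :=
  max_eq_right (by omega)

lemma tailX_of_add_le (h : i + j ≤ b + c) : tailX a b c i j = a + b + c - i + j := by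
  rw [tailX, epsP_of_add_le h]
  ring

lemma tailX_of_le_add (h : b + c ≤ i + j) :
    tailX a b c i j = a + 3 * (b + c) - 3 * i - j := by
  rw [tailX, epsP_of_le_add h]
  ring

lemma tailY_of_add_le (h : i + j ≤ b + c) : tailY b c i j = b + c - j := by
  rw [tailY, epsP_of_add_le h, sub_zero]

lemma tailY_of_le_add (h : b + c ≤ i + j) : tailY b c i j = i := by
  rw [tailY, epsP_of_le_add h]
  ring

lemma mem_Sstring_iff : (x, y, z) ∈ Sstring a b c i j ↔
    (y = i ∧ z = j ∧ i ≤ x ∧ x < tailX a b c i j) ∨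
    (x = tailX a b c i j ∧ z = j ∧ i ≤ y ∧ y < tailY b c i j) ∨
    (x = tailX a b c i j ∧ y = tailY b c i j ∧ j ≤ z ∧ z ≤ c) := by
  constructor
  · rintro (⟨_, hix, hx, ⟨⟩⟩ | ⟨_, hiy, hy, ⟨⟩⟩ | ⟨_, hjz, hzc, ⟨⟩⟩)
    · exact Or.inl ⟨rfl, rfl, hix, hx⟩
    · exact Or.inr (Or.inl ⟨rfl, rfl, hiy, hy⟩)
    · exact Or.inr (Or.inr ⟨rfl, rfl, hjz, hzc⟩)
  · rintro (⟨rfl, rfl, hix, hx⟩ | ⟨rfl, rfl, hiy, hy⟩ | ⟨rfl, rfl, hjz, hzc⟩)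
    · exact Or.inl ⟨x, hix, hx, rfl⟩
    · exact Or.inr (Or.inl ⟨y, hiy, hy, rfl⟩)
    · exact Or.inr (Or.inr ⟨z, hjz, hzc, rfl⟩)

/-- The index pair `(i, j)` of the only string `S(P_{ij})`, over all integer pairs, that can contain
`(x, y, z)`. The three branches invert the parametrisations of the first leg, of the part of the
other two legs with `y + z ≤ b + c`, and of the part of the last leg with `y + z > b + c`. -/
def stringHead (a b c x y z : ℤ) : ℤ × ℤ :=
  if x < tailX a b c y z then (y, z)
  else if y + z ≤ b + c then (a + b + c + z - x, z)
  else (min y (a + 2 * (b + c) - x - y), max (b + c - y) (a + 3 * (b + c) - 3 * y - x))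

lemma stringHead_of_lt (h : x < tailX a b c y z) : stringHead a b c x y z = (y, z) :=
  if_pos h

lemma stringHead_of_add_le (hx : tailX a b c y z ≤ x) (hyz : y + z ≤ b + c) :
    stringHead a b c x y z = (a + b + c + z - x, z) := by
  rw [stringHead, if_neg hx.not_gt, if_pos hyz]

lemma stringHead_of_lt_add (hx : tailX a b c y z ≤ x) (hyz : b + c < y + z) :
    stringHead a b c x y z =
      (min y (a + 2 * (b + c) - x - y), max (b + c - y) (a + 3 * (b + c) - 3 * y - x)) := by
  rw [stringHead, if_neg hx.not_gt, if_neg hyz.not_ge]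

lemma mem_Sstring_stringHead (hyx : y ≤ x) (hzc : z ≤ c) :
    (x, y, z) ∈ Sstring a b c (stringHead a b c x y z).1 (stringHead a b c x y z).2 := by
  rw [mem_Sstring_iff]
  rcases lt_or_ge x (tailX a b c y z) with hx | hx
  · rw [stringHead_of_lt hx]
    exact Or.inl ⟨rfl, rfl, hyx, hx⟩
  rcases le_or_gt (y + z) (b + c) with hyz | hyz
  · rw [stringHead_of_add_le hx hyz]
    rw [tailX_of_add_le hyz] at hx
    have hij : a + b + c + z - x + z ≤ b + c := by omega
    rw [tailX_of_add_le hij, tailY_of_add_le hij]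
    omega
  · rw [stringHead_of_lt_add hx hyz]
    rw [tailX_of_le_add hyz.le] at hx
    rcases le_total x (a + 2 * (b + c) - 2 * y) with hxy | hxy
    · rw [min_eq_left (by omega), max_eq_right (by omega)]
      have hij : b + c ≤ y + (a + 3 * (b + c) - 3 * y - x) := by omega
      rw [tailX_of_le_add hij, tailY_of_le_add hij]
      omega
    · rw [min_eq_right (by omega), max_eq_left (by omega)]
      have hij : a + 2 * (b + c) - x - y + (b + c - y) ≤ b + c := by omega
      rw [tailX_of_add_le hij, tailY_of_add_le hij]
      omega

lemma stringHead_tail_of_add_le (hij : i + j ≤ b + c) (hjz : j ≤ z) :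
    stringHead a b c (tailX a b c i j) (tailY b c i j) z = (i, j) := by
  rw [tailX_of_add_le hij, tailY_of_add_le hij]
  have hx : tailX a b c (b + c - j) z ≤ a + b + c - i + j := by
    rw [tailX_of_le_add (by omega)]
    omega
  rcases hjz.eq_or_lt with rfl | hjz
  · rw [stringHead_of_add_le hx (by omega)]
    exact Prod.ext (by ring) rfl
  · rw [stringHead_of_lt_add hx (by omega), min_eq_right (by omega), max_eq_left (by omega)]
    exact Prod.ext (by ring) (by ring)

lemma stringHead_tail_of_lt_add (hij : b + c < i + j) (hjz : j ≤ z) :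
    stringHead a b c (tailX a b c i j) (tailY b c i j) z = (i, j) := by
  rw [tailX_of_le_add hij.le, tailY_of_le_add hij.le]
  have hx : tailX a b c i z ≤ a + 3 * (b + c) - 3 * i - j := by
    rw [tailX_of_le_add (by omega)]
    omega
  rw [stringHead_of_lt_add hx (by omega), min_eq_left (by omega), max_eq_right (by omega)]
  exact Prod.ext rfl (by ring)

lemma add_lt_of_lt_tailY (hiy : i ≤ y) (hy : y < tailY b c i j) : y + j < b + c := by
  rcases le_total (i + j) (b + c) with hij | hij
  · rw [tailY_of_add_le hij] at hy
    omega
  · rw [tailY_of_le_add hij] at hy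
    omega

lemma stringHead_eq_of_mem_Sstring (h : (x, y, z) ∈ Sstring a b c i j) :
    stringHead a b c x y z = (i, j) := by
  rcases mem_Sstring_iff.mp h with
    ⟨rfl, rfl, -, hx⟩ | ⟨rfl, rfl, hiy, hy⟩ | ⟨rfl, rfl, hjz, -⟩
  · exact stringHead_of_lt hx
  · have hyz := add_lt_of_lt_tailY hiy hy
    rw [tailX_of_add_le (by omega), stringHead_of_add_le _ hyz.le]
    · exact Prod.ext (by ring) rfl
    · rw [tailX_of_add_le hyz.le]
      omega
  · rcases le_or_gt (i + j) (b + c) with hij | hij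
    · exact stringHead_tail_of_add_le hij hjz
    · exact stringHead_tail_of_lt_add hij hjz

lemma tailY_le_tailX_iff_of_add_le (hij : i + j ≤ b + c) :
    tailY b c i j ≤ tailX a b c i j ↔ i - 2 * j ≤ a := by
  rw [tailX_of_add_le hij, tailY_of_add_le hij]
  omega

lemma tailY_le_tailX_iff_of_le_add (hij : b + c ≤ i + j) :
    tailY b c i j ≤ tailX a b c i j ↔ 4 * i + j ≤ a + 3 * b + 3 * c := by
  rw [tailX_of_le_add hij, tailY_of_le_add hij]
  omega

lemma isPseudohead_iff : IsPseudohead a b c i j ↔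
    0 ≤ j ∧ j ≤ c ∧ j ≤ i ∧ i ≤ b + c ∧ tailY b c i j ≤ tailX a b c i j := by
  rw [IsPseudohead]
  rcases le_total (i + j) (b + c) with hij | hij
  · rw [tailY_le_tailX_iff_of_add_le hij]
    omega
  · rw [tailY_le_tailX_iff_of_le_add hij]
    omega

lemma tailX_le (hji : j ≤ i) : tailX a b c i j ≤ a + b + c := by
  have hε : 0 ≤ epsP b c i j := le_max_left _ _
  rw [tailX]
  omega

lemma tailY_le (hj : 0 ≤ j) (hi : i ≤ b + c) : tailY b c i j ≤ b + c := by
  have hε : epsP b c i j ≤ j := max_le hj (by omega)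
  rw [tailY]
  omega

lemma le_tailY (hbc : c - 1 ≤ b) (hjc : j ≤ c) (hji : j ≤ i) : c ≤ tailY b c i j := by
  rcases le_total (i + j) (b + c) with hij | hij
  · rw [tailY_of_add_le hij]
    omega
  · rw [tailY_of_le_add hij]
    omega

lemma IsPseudohead.isSubpartition (h : IsPseudohead a b c i j) (hbc : c - 1 ≤ b)
    (hmem : (x, y, z) ∈ Sstring a b c i j) : IsSubpartition a b c x y z := by
  obtain ⟨hj, hjc, hji, hi, hqp⟩ := isPseudohead_iff.mp h
  have hp : tailX a b c i j ≤ a + b + c := tailX_le hji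
  have hq : tailY b c i j ≤ b + c := tailY_le hj hi
  have hcq : c ≤ tailY b c i j := le_tailY hbc hjc hji
  rw [IsSubpartition]
  rcases mem_Sstring_iff.mp hmem with
    ⟨rfl, rfl, hix, hx⟩ | ⟨rfl, rfl, hiy, hy⟩ | ⟨rfl, rfl, hjz, hzc⟩ <;>
  omega

lemma IsPseudohead.isNegative (h : IsPseudohead a b c i j)
    (hmem : (x, y, z) ∈ Sstring a b c i j) : IsNegative a b c x y z := by
  obtain ⟨-, -, -, -, -, hija⟩ := h
  rw [isNegative_iff]
  have hp_of_add_le (hij : i + j ≤ b + c) : b + c ≤ tailX a b c i j + j := by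
    rw [tailX_of_add_le hij]
    omega
  rcases mem_Sstring_iff.mp hmem with
    ⟨rfl, rfl, -, -⟩ | ⟨rfl, rfl, hiy, hy⟩ | ⟨rfl, rfl, hjz, -⟩
  · right
    omega
  · left
    have hyz := add_lt_of_lt_tailY hiy hy
    exact hp_of_add_le (by omega)
  · rcases le_total (i + j) (b + c) with hij | hij
    · left
      have hp := hp_of_add_le hij
      omega
    · right
      rw [tailY_of_le_add hij]
      omega

lemma tailY_le_tailX_of_mem_Sstring (hmem : (x, y, z) ∈ Sstring a b c i j)
    (hyx : y ≤ x) (hneg : IsNegative a b c x y z) : tailY b c i j ≤ tailX a b c i j := by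
  rw [isNegative_iff] at hneg
  have tailY_le_of_negative (hij : i + j ≤ b + c)
      (h : b + c ≤ tailX a b c i j + j ∨ i ≤ a + 2 * j) : tailY b c i j ≤ tailX a b c i j := by
    rw [tailX_of_add_le hij] at h
    rw [tailY_le_tailX_iff_of_add_le hij]
    omega
  rcases mem_Sstring_iff.mp hmem with
    ⟨rfl, rfl, -, hx⟩ | ⟨rfl, rfl, hiy, hy⟩ | ⟨rfl, rfl, -, -⟩
  · rcases le_total (y + z) (b + c) with hij | hij
    · exact tailY_le_of_negative hij (by omega)
    · rw [tailY_of_le_add hij]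
      omega
  · have hyz := add_lt_of_lt_tailY hiy hy
    exact tailY_le_of_negative (by omega) (by omega)
  · exact hyx

lemma IsSubpartition.isPseudohead (hsub : IsSubpartition a b c x y z)
    (hneg : IsNegative a b c x y z) (hmem : (x, y, z) ∈ Sstring a b c i j) :
    IsPseudohead a b c i j := by
  obtain ⟨hz, hzy, hyx, hx, hy, hzc⟩ := hsub
  have hqp := tailY_le_tailX_of_mem_Sstring hmem hyx hneg
  refine isPseudohead_iff.mpr ?_
  rcases mem_Sstring_iff.mp hmem with
    ⟨rfl, rfl, -, -⟩ | ⟨rfl, rfl, hiy, hyq⟩ | ⟨rfl, rfl, hjz, -⟩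
  · exact ⟨hz, hzc, hzy, hy, hqp⟩
  · have hyz := add_lt_of_lt_tailY hiy hyq
    rw [tailX_of_add_le (by omega)] at hx
    exact ⟨hz, hzc, by omega, by omega, hqp⟩
  · rcases le_total (i + j) (b + c) with hij | hij
    · rw [tailX_of_add_le hij] at hx
      rw [tailY_of_add_le hij] at hy
      exact ⟨by omega, by omega, by omega, by omega, hqp⟩
    · rw [tailY_of_le_add hij] at hy hzy
      exact ⟨by omega, by omega, by omega, by omega, hqp⟩

end NegativeSubpartitions

theorem strings_cover_negative_subpartitions_general (a b c : ℤ) (hbc : c - 1 ≤ b) :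
    (∀ x y z : ℤ, IsSubpartition a b c x y z → IsNegative a b c x y z →
      ∃! p : ℤ × ℤ, IsPseudohead a b c p.1 p.2 ∧ (x, y, z) ∈ Sstring a b c p.1 p.2) ∧
    (∀ i j x y z : ℤ, IsPseudohead a b c i j → (x, y, z) ∈ Sstring a b c i j →
      IsSubpartition a b c x y z ∧ IsNegative a b c x y z) := by
  constructor
  · intro x y z hsub hneg
    have ⟨_, _, hyx, _, _, hzc⟩ := hsub
    have hmem : (x, y, z) ∈ Sstring a b c _ _ := mem_Sstring_stringHead hyx hzc
    exact ⟨stringHead a b c x y z, ⟨hsub.isPseudohead hneg hmem, hmem⟩,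
      fun p hp => (stringHead_eq_of_mem_Sstring hp.2).symm⟩
  · intro i j x y z hhead hmem
    exact ⟨hhead.isSubpartition hbc hmem, hhead.isNegative hmem⟩

theorem strings_cover_negative_subpartitions (a b c : ℤ)
    (ha : 0 ≤ a) (hb : 0 ≤ b) (hc : 0 ≤ c)
    (hab : b - 1 ≤ a) (hac : c - 1 ≤ a) (hbc : c - 1 ≤ b) :
    (∀ x y z : ℤ, IsSubpartition a b c x y z →
      min (b + c - x) (ceilHalf (y - a)) ≤ z →
        ∃! p : ℤ × ℤ, IsPseudohead a b c p.1 p.2 ∧ (x, y, z) ∈ Sstring a b c p.1 p.2) ∧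
    (∀ i j x y z : ℤ, IsPseudohead a b c i j → (x, y, z) ∈ Sstring a b c i j →
      IsSubpartition a b c x y z ∧ min (b + c - x) (ceilHalf (y - a)) ≤ z) :=
  strings_cover_negative_subpartitions_general a b c hbc
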